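/- arXiv:2507.11056 — 4 statements merged into one kernel-verified Lean document; each statement's English description precedes it below -/
import Mathlib

section
/- Let K be a field of characteristic different from 2, V a finite-dimensional K-vector space with a nondegenerate alternating bilinear form f, and let φ ∈ Sp(V, f) be the product φ = στ of two involutions σ, τ ∈ Sp(V, f). Then for every v ∈ V and all integers i, j one has f(σ(φ^i v), φ^j v) = 0 and f(τ(φ^i v), φ^j v) = 0; in particular, for every φ-cyclic subspace T (the span of the φ-orbit of a single vector), σ(T) and τ(T) are contained in the orthogonal complement T^⊥ of T with respect to f. -/
/-!
An isometric involution `ρ` of an alternating form satisfies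
`f (ρ x) x = f x (ρ x) = -f (ρ x) x`, hence `f (ρ x) x = 0` when `2 ≠ 0`.
Since `σ` inverts `φ = σ τ` by conjugation, every `σ φ ^ k` is such an involution, and
`φ ^ (-j) σ φ ^ i = σ φ ^ (i + j)` turns `f (σ (φ ^ i v)) (φ ^ j v)` into
`f (σ φ ^ (i + j) v) v`. The claim for `τ` follows from `τ φ ^ i = σ φ ^ (i + 1)`, and the claim
about cyclic subspaces by bilinearity.
-/

/-- The group of linear automorphisms preserving the bilinear form `f`. -/
def isometrySubgroup {K V : Type*} [Field K] [AddCommGroup V] [Module K V]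
    (f : V →ₗ[K] V →ₗ[K] K) : Subgroup (V ≃ₗ[K] V) where
  carrier := {g | ∀ u w : V, f (g u) (g w) = f u w}
  one_mem' := fun _ _ => rfl
  mul_mem' := fun {a b} ha hb u w => (ha (b u) (b w)).trans (hb u w)
  inv_mem' := fun {a} ha u w => by
    have h (x : V) : a (a⁻¹ x) = x := a.apply_symm_apply x
    rw [← ha, h, h]

theorem apply_self_eq_zero_of_involution {K V : Type*} [Field K] [AddCommGroup V] [Module K V]
    (h2 : (2 : K) ≠ 0) (f : V →ₗ[K] V →ₗ[K] K) (halt : ∀ v : V, f v v = 0)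
    (ρ : V ≃ₗ[K] V) (hρ : ρ ∈ isometrySubgroup f) (hρ2 : ρ * ρ = 1) (x : V) :
    f (ρ x) x = 0 := by
  have hx : ρ (ρ x) = x := LinearEquiv.congr_fun hρ2 x
  have h1 : f x (ρ x) = f (ρ x) x := by
    have := hρ (ρ x) x
    rwa [hx] at this
  have h3 : f (ρ x) x + f x (ρ x) = 0 := by
    have := halt (ρ x + x)
    simpa [halt] using this
  rw [h1, ← two_mul] at h3
  exact (mul_eq_zero.mp h3).resolve_left h2

/-- In the dihedral group generated by involutions `s` and `t`, the element `s` inverts every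
power of the rotation `s * t`. -/
theorem involution_mul_zpow {G : Type*} [Group G] (s t : G) (hs : s * s = 1) (ht : t * t = 1)
    (k : ℤ) : s * (s * t) ^ k = (s * t) ^ (-k) * s := by
  have hs' : s⁻¹ = s := inv_eq_of_mul_eq_one_left hs
  have ht' : t⁻¹ = t := inv_eq_of_mul_eq_one_left ht
  have h : s * (s * t) * s⁻¹ = (s * t)⁻¹ := by
    rw [mul_inv_rev, hs', ht', ← mul_assoc, hs, one_mul]
  rw [zpow_neg, ← inv_zpow, ← h, conj_zpow, inv_mul_cancel_right]


/-- Lemma SYMPINV0: Let `char K ≠ 2`, `V` finite-dimensional over `K` with a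
nondegenerate alternating bilinear form `f`, and let `φ = σ τ ∈ Sp(V, f)` be a product of two
symplectic involutions `σ`, `τ`. Then `f(σ(φ^i v), φ^j v) = 0 = f(τ(φ^i v), φ^j v)` for all
`v ∈ V` and `i, j ∈ ℤ`; in particular, for every `φ`-cyclic subspace `T`, the images `σ(T)`
and `τ(T)` lie in `T^⊥`. -/
theorem product_of_two_involutions_cyclic_subspace_isotropic
    (K : Type*) [Field K] (hchar : (2 : K) ≠ 0)
    (V : Type*) [AddCommGroup V] [Module K V] [FiniteDimensional K V]
    (f : V →ₗ[K] V →ₗ[K] K)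
    (halt : ∀ v : V, f v v = 0)
    (hnd : ∀ v : V, (∀ w : V, f v w = 0) → v = 0)
    (φ σ τ : V ≃ₗ[K] V)
    (hσ : ∀ u w : V, f (σ u) (σ w) = f u w) (hσ2 : σ * σ = 1)
    (hτ : ∀ u w : V, f (τ u) (τ w) = f u w) (hτ2 : τ * τ = 1)
    (hφ : φ = σ * τ) :
    (∀ (v : V) (i j : ℤ),
        f (σ ((φ ^ i) v)) ((φ ^ j) v) = 0 ∧ f (τ ((φ ^ i) v)) ((φ ^ j) v) = 0) ∧
    (∀ v : V, ∀ x ∈ Submodule.span K (Set.range fun i : ℤ => (φ ^ i) v),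
      ∀ t ∈ Submodule.span K (Set.range fun i : ℤ => (φ ^ i) v),
        f t (σ x) = 0 ∧ f t (τ x) = 0) := by
  have hσm : σ ∈ isometrySubgroup f := hσ
  have hφm : φ ∈ isometrySubgroup f := hφ ▸ mul_mem hσm (show τ ∈ isometrySubgroup f from hτ)
  have hinv (k : ℤ) : σ * φ ^ k = φ ^ (-k) * σ := by
    rw [hφ]
    exact involution_mul_zpow σ τ hσ2 hτ2 k
  have hS (v : V) (i j : ℤ) : f (σ ((φ ^ i) v)) ((φ ^ j) v) = 0 := by
    have hinvol : (σ * φ ^ (i + j)) * (σ * φ ^ (i + j)) = 1 := by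
      nth_rewrite 1 [hinv]
      rw [mul_assoc, ← mul_assoc σ σ, hσ2, one_mul, ← zpow_add, neg_add_cancel, zpow_zero]
    have h0 := apply_self_eq_zero_of_involution hchar f halt _
      (mul_mem hσm (zpow_mem hφm (i + j))) hinvol v
    have hj : φ ^ j * (σ * φ ^ (i + j)) = σ * φ ^ i := by
      rw [hinv, hinv, ← mul_assoc, ← zpow_add]
      congr 2
      ring
    have h1 := zpow_mem hφm j ((σ * φ ^ (i + j)) v) v
    rw [h0, ← LinearEquiv.mul_apply, hj] at h1
    exact h1
  have hT (v : V) (i j : ℤ) : f (τ ((φ ^ i) v)) ((φ ^ j) v) = 0 := by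
    have h : σ * φ ^ (i + 1) = τ * φ ^ i := by
      have hτφ : τ = σ * φ := by rw [hφ, ← mul_assoc, hσ2, one_mul]
      rw [hτφ, add_comm, zpow_add, zpow_one, mul_assoc]
    have h1 : σ ((φ ^ (i + 1)) v) = τ ((φ ^ i) v) := LinearEquiv.congr_fun h v
    rw [← h1]
    exact hS v (i + 1) j
  have hspan (ρ : V ≃ₗ[K] V) (v : V)
      (hρ : ∀ i j : ℤ, f (ρ ((φ ^ i) v)) ((φ ^ j) v) = 0)
      (x : V) (hx : x ∈ Submodule.span K (Set.range fun i : ℤ => (φ ^ i) v))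
      (t : V) (ht : t ∈ Submodule.span K (Set.range fun i : ℤ => (φ ^ i) v)) :
      f t (ρ x) = 0 := by
    have hanti (a b : V) (hab : f a b = 0) : f b a = 0 := by
      have := halt (a + b)
      simpa [halt, hab] using this
    induction hx, ht using Submodule.span_induction₂ with
    | mem_mem x y hx hy =>
      obtain ⟨i, rfl⟩ := hx
      obtain ⟨j, rfl⟩ := hy
      exact hanti _ _ (hρ i j)
    | zero_left => simp
    | zero_right => simp
    | add_left x y z _ _ _ h1 h2 => simp [h1, h2]
    | add_right x y z _ _ _ h1 h2 => simp [h1, h2]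
    | smul_left r x y _ _ h => simp [h]
    | smul_right r x y _ _ h => simp [h]
  exact ⟨fun v i j => ⟨hS v i j, hT v i j⟩, fun v x hx t ht =>
    ⟨hspan σ v (hS v) x hx t ht, hspan τ v (hT v) x hx t ht⟩⟩
end

section
/- Let K be a finite field of characteristic different from 2 and let φ ∈ GL(V) for a finite-dimensional K-vector space V. Assume φ is cyclic (some vector's φ-orbit spans V) with minimal polynomial p^t where p is irreducible of even degree, and φ is reversible in GL(V) (conjugate in GL(V) to φ⁻¹). Then φ is a product of two skew-involutions of GL(V), i.e., φ = η₁η₂ with η₁² = η₂² = −1. -/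
/-!
Let `A = K[X]/(p^t)` with `x` the class of `X`. As `φ` is cyclic, `V` is identified with `A` in such
a way that `φ` becomes multiplication by `x` (`exists_equiv_adjoinRoot`). Reversibility says that
`x⁻¹` is again annihilated by `p^t`, so that `x ↦ x⁻¹` extends to an algebra involution `σ` of `A`.
If `u : A` satisfies `u * σ u = -1`, then `η : a ↦ u * σ a` squares to `-1` and
`η φ η⁻¹ = φ⁻¹`; hence `η` and `η⁻¹ φ` are skew-involutions with product `φ`.

To find `u`, pass to the residue field `L = K[X]/(p)`. Since `p` has even degree, the class of `X` in
`L` is not `±1`, so `σ` induces a non-trivial involution of `L`, and `-1` is a norm for it because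
every nondegenerate binary quadratic form over a finite field of odd characteristic is universal
(`exists_mul_involution_eq_neg_one`). A lift `u₀` of the solution to `A` satisfies
`u₀ * σ u₀ = -1 + n` with `n ^ t = 0`, and if `q = char K` then `u = u₀ ^ (q ^ t)` is an exact
solution, because raising to the power `q ^ t` is a ring homomorphism killing `n`
(`exists_mul_eq_neg_one_lift`).
-/

open Polynomial

/-- In a finite field of odd characteristic, `-1` is a norm for every non-trivial involution `σ`.
With `d ≠ 0` and `σ d = -d`, the norm of `a + b * d` for `a`, `b` fixed by `σ` is
`a ^ 2 - d ^ 2 * b ^ 2`. -/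
lemma exists_mul_involution_eq_neg_one {L : Type*} [Field L] [Finite L] (h2 : (2 : L) ≠ 0)
    (σ : L →+* L) (hσ : ∀ a, σ (σ a) = a) (x : L) (hx : σ x ≠ x) :
    ∃ u : L, u * σ u = -1 := by
  set F := σ.eqLocusField (RingHom.id L) with hF
  have hmem : ∀ a : L, a ∈ F ↔ σ a = a := fun a => Iff.rfl
  set d := x - σ x with hd
  have hσd : σ d = -d := by simp [hd, hσ]
  have hd0 : d ≠ 0 := sub_ne_zero.2 (Ne.symm hx)
  have hd2 : d ^ 2 ∈ F := by rw [hmem, map_pow, hσd, neg_sq]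
  let : Fintype F := Fintype.ofFinite F
  have hodd : Fintype.card F % 2 = 1 := by
    apply FiniteField.odd_card_of_char_ne_two
    intro h
    apply h2
    have : ((2 : ℕ) : F) = 0 := by
      rw [← h]; exact ringChar.Nat.cast_ringChar
    exact congrArg (fun z : F => (z : L)) this
  set b : F := ⟨d ^ 2, hd2⟩ with hb
  have hb0 : -b ≠ 0 := by
    rw [neg_ne_zero]
    intro h
    exact pow_ne_zero 2 hd0 (congrArg Subtype.val h)
  obtain ⟨s, r, hsr⟩ := FiniteField.exists_root_sum_quadratic (R := F)
    (f := C 1 * X ^ 2 + C 0 * X + C 1) (g := C (-b) * X ^ 2 + C 0 * X + C 0)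
    (degree_quadratic one_ne_zero) (degree_quadratic hb0) hodd
  simp only [eval_add, eval_mul, eval_C, eval_pow, eval_X] at hsr
  have h : (s : L) ^ 2 + 1 - d ^ 2 * (r : L) ^ 2 = 0 := by
    have := congrArg (fun z : F => (z : L)) hsr
    simp [hb] at this
    linear_combination this
  have hs : σ s = s := s.2
  have hr : σ r = r := r.2
  refine ⟨s + r * d, ?_⟩
  rw [map_add, map_mul, hs, hr, hσd]
  linear_combination h

/-- Solutions of `u * σ u = -1` lift along a surjection with nil kernel of bounded exponent `t`, in
prime characteristic. -/
lemma exists_mul_eq_neg_one_lift {A L : Type*} [CommRing A] [CommRing L] (q t : ℕ)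
    [Fact q.Prime] [CharP A q] (π : A →+* L) (hπ : Function.Surjective π)
    (hker : ∀ a, π a = 0 → a ^ t = 0) (σ : A →+* A) (τ : L →+* L)
    (hστ : ∀ a, π (σ a) = τ (π a)) (hu : ∃ u : L, u * τ u = -1) :
    ∃ u : A, u * σ u = -1 := by
  obtain ⟨w, hw⟩ := hu
  obtain ⟨u, rfl⟩ := hπ w
  refine ⟨u ^ q ^ t, ?_⟩
  have h0 : (u * σ u + 1) ^ t = 0 := hker _ (by simp [hστ, hw])
  have h1 : (u * σ u + 1) ^ q ^ t = 0 :=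
    pow_eq_zero_of_le (Nat.lt_pow_self (Fact.out : q.Prime).one_lt).le h0
  rw [add_pow_char_pow, one_pow, mul_pow, ← map_pow] at h1
  exact eq_neg_of_add_eq_zero_left h1

/-- A space with a cyclic endomorphism `f` is `K[X]/(minpoly f)`, on which `f` acts as
multiplication by the class of `X`. -/
lemma exists_equiv_adjoinRoot {K V : Type*} [Field K] [AddCommGroup V] [Module K V]
    (f : Module.End K V)
    (v : V) (hv : Submodule.span K (Set.range fun i : ℕ => (f ^ i) v) = ⊤) :
    ∃ e : AdjoinRoot (minpoly K f) ≃ₗ[K] V, ∀ a, e (AdjoinRoot.root _ * a) = f (e a) := by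
  let ψ : AdjoinRoot (minpoly K f) →ₐ[K] Module.End K V :=
    Ideal.Quotient.liftₐ (Ideal.span {minpoly K f}) (aeval f) (fun a ha => by
      obtain ⟨c, rfl⟩ := Ideal.mem_span_singleton.1 ha
      simp)
  have hψ : ∀ g, ψ (AdjoinRoot.mk _ g) = aeval f g := fun g => rfl
  let e : AdjoinRoot (minpoly K f) →ₗ[K] V := (LinearMap.applyₗ v).comp ψ.toLinearMap
  have he : ∀ a, e a = ψ a v := fun a => rfl
  have hinj : Function.Injective e := by
    rw [injective_iff_map_eq_zero]
    intro a
    induction a using AdjoinRoot.induction_on with | ih g =>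
    intro h
    rw [he, hψ] at h
    rw [AdjoinRoot.mk_eq_zero]
    refine minpoly.dvd K f (LinearMap.ext_on hv ?_)
    rintro _ ⟨i, rfl⟩
    have hc : aeval f g * f ^ i = f ^ i * aeval f g := by
      rw [← aeval_X_pow (R := K) f, ← map_mul, mul_comm, map_mul]
    have := LinearMap.congr_fun hc v
    simpa [h] using this
  have hsurj : Function.Surjective e := by
    rw [← LinearMap.range_eq_top, eq_top_iff, ← hv, Submodule.span_le]
    rintro _ ⟨i, rfl⟩
    exact ⟨AdjoinRoot.mk _ (X ^ i), by rw [he, hψ, aeval_X_pow]⟩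
  refine ⟨LinearEquiv.ofBijective e ⟨hinj, hsurj⟩, fun a => ?_⟩
  change e _ = f (e a)
  rw [he, he, map_mul, ← AdjoinRoot.mk_X, hψ, aeval_X]
  rfl

/-- Every algebra involution of `K[X]/(p ^ t)` inverting the class of `X` admits `u` with
`u * σ u = -1`; even degree excludes `p = X ± 1`. -/
lemma exists_mul_eq_neg_one_adjoinRoot {K : Type*} [Field K] [Finite K] (hchar : (2 : K) ≠ 0)
    (p : K[X]) (t : ℕ) (ht : 1 ≤ t) (hp : Irreducible p) (hdeg : Even p.natDegree)
    (σ : AdjoinRoot (p ^ t) →ₐ[K] AdjoinRoot (p ^ t)) (hσσ : ∀ a, σ (σ a) = a)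
    (hσ : σ (AdjoinRoot.root _) * AdjoinRoot.root _ = 1) :
    ∃ u, u * σ u = -1 := by
  have : Fact (Irreducible p) := ⟨hp⟩
  have hp0 : p ≠ 0 := hp.ne_zero
  have hpt : p ∣ p ^ t := dvd_pow_self p (by omega)
  let π : AdjoinRoot (p ^ t) →ₐ[K] AdjoinRoot p :=
    AdjoinRoot.liftAlgHom (p ^ t) (Algebra.ofId K _) (AdjoinRoot.root p) (by
      change aeval (AdjoinRoot.root p) (p ^ t) = 0
      rw [AdjoinRoot.aeval_eq, AdjoinRoot.mk_eq_zero]; exact hpt)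
  have hπ : ∀ g, π (AdjoinRoot.mk _ g) = AdjoinRoot.mk p g := fun g => by
    rw [← AdjoinRoot.aeval_eq, ← AdjoinRoot.aeval_eq, ← aeval_algHom_apply]
    simp [π]
  have hπroot : π (AdjoinRoot.root _) = AdjoinRoot.root p := by simp [π]
  have hπs : Function.Surjective π := fun a => by
    induction a using AdjoinRoot.induction_on with | ih g => exact ⟨_, hπ g⟩
  have hker : ∀ a, π a = 0 → a ^ t = 0 := fun a => by
    induction a using AdjoinRoot.induction_on with | ih g =>
    rw [hπ, AdjoinRoot.mk_eq_zero, ← map_pow, AdjoinRoot.mk_eq_zero]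
    exact fun h => pow_dvd_pow_of_dvd h t
  set y := π (σ (AdjoinRoot.root _)) with hy
  have hyx : y * AdjoinRoot.root p = 1 := by
    rw [hy, ← hπroot, ← map_mul, hσ, map_one]
  -- `p ^ t` annihilates `σ x`, and `L` is reduced.
  have hpy : aeval y p = 0 := by
    have : (aeval y p) ^ t = 0 := by
      rw [← map_pow, hy, aeval_algHom_apply, aeval_algHom_apply, AdjoinRoot.aeval_eq,
        AdjoinRoot.mk_self, map_zero, map_zero]
    exact eq_zero_of_pow_eq_zero this
  let τ : AdjoinRoot p →ₐ[K] AdjoinRoot p := AdjoinRoot.liftAlgHom p (Algebra.ofId K _) y hpy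
  have hτroot : τ (AdjoinRoot.root p) = y :=
    AdjoinRoot.liftAlgHom_root _ _ _ _
  have hστ : ∀ a, π (σ a) = τ (π a) := fun a => by
    have : π.comp σ = τ.comp π := AdjoinRoot.algHom_ext (by simp [hπroot, hτroot, ← hy])
    exact DFunLike.congr_fun this a
  have hττ : ∀ a, τ (τ a) = a := fun a => by
    obtain ⟨a, rfl⟩ := hπs a
    rw [← hστ, ← hστ, hσσ]
  have hne : τ (AdjoinRoot.root p) ≠ AdjoinRoot.root p := by
    rw [hτroot]
    intro h
    rw [h, ← AdjoinRoot.mk_X, ← map_mul, ← sub_eq_zero, ← map_one (AdjoinRoot.mk p), ← map_sub,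
      AdjoinRoot.mk_eq_zero] at hyx
    have hfac : (X * X - 1 : K[X]) = (X - C 1) * (X - C (-1)) := by
      simp only [map_neg, map_one]; ring
    have hpos := hp.natDegree_pos
    have key : ∀ c : K, ¬ p ∣ X - C c := fun c hc => by
      have h1 := natDegree_le_of_dvd hc (X_sub_C_ne_zero c)
      rw [natDegree_X_sub_C] at h1
      obtain ⟨k, hk⟩ := hdeg
      omega
    rw [hfac] at hyx
    exact (hp.prime.dvd_or_dvd hyx).elim (key _) (key _)
  have : Module.Finite K (AdjoinRoot p) := (AdjoinRoot.powerBasis hp0).finite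
  have : Finite (AdjoinRoot p) := Module.finite_of_finite K
  obtain ⟨q, hq⟩ := CharP.exists K
  have : Fact q.Prime := ⟨CharP.char_is_prime K q⟩
  have : Nontrivial (AdjoinRoot (p ^ t)) := π.toRingHom.domain_nontrivial
  have : CharP (AdjoinRoot (p ^ t)) q := charP_of_injective_algebraMap' K q
  have h2 : (2 : AdjoinRoot p) ≠ 0 := by
    have := (map_ne_zero (algebraMap K (AdjoinRoot p))).2 hchar
    rwa [map_ofNat] at this
  exact exists_mul_eq_neg_one_lift q t π.toRingHom hπs hker σ.toRingHom τ.toRingHom hστ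
    (exists_mul_involution_eq_neg_one h2 τ.toRingHom hττ _ hne)


/-- Lemma SKEWINV2: Let `K` be a finite field of characteristic ≠ 2 and let
`φ ∈ GL(V)` be cyclic with minimal polynomial `p^t`, `p` irreducible of even degree.  If `φ`
is reversible in `GL(V)` (conjugate to `φ⁻¹`), then `φ` is a product of two skew-involutions
of `GL(V)`. -/
theorem cyclic_reversible_product_of_two_skew_involutions
    (K : Type*) [Field K] [Fintype K] (hchar : (2 : K) ≠ 0)
    (V : Type*) [AddCommGroup V] [Module K V] [FiniteDimensional K V]
    (φ : V ≃ₗ[K] V)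
    (hcyc : ∃ v : V, Submodule.span K (Set.range fun i : ℕ => (φ ^ i) v) = ⊤)
    (p : Polynomial K) (t : ℕ) (ht : 1 ≤ t)
    (hp : Irreducible p) (hdeg : Even p.natDegree)
    (hmin : minpoly K (φ : V →ₗ[K] V) = p ^ t)
    (hrev : ∃ α : V ≃ₗ[K] V, α⁻¹ * φ * α = φ⁻¹) :
    ∃ η₁ η₂ : V ≃ₗ[K] V,
      η₁ * η₁ = LinearEquiv.neg K ∧ η₂ * η₂ = LinearEquiv.neg K ∧ φ = η₁ * η₂ := by
  obtain ⟨v, hv⟩ := hcyc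
  obtain ⟨α, hα⟩ := hrev
  set f : Module.End K V := (φ : V →ₗ[K] V) with hf
  set g : Module.End K V := (φ.symm : V →ₗ[K] V) with hg
  have hpow : ∀ (i : ℕ) (w : V), (φ ^ i) w = (f ^ i) w := fun i w => by
    induction i generalizing w with
    | zero => rfl
    | succ i ih => rw [pow_succ, pow_succ]; exact ih (φ w)
  simp only [hpow] at hv
  have hE := exists_equiv_adjoinRoot f v hv
  -- `φ⁻¹` is conjugate to `φ`, hence annihilated by `p ^ t`.
  have hgm : aeval g (p ^ t) = 0 := by
    have hgf : g = α.symm.conjAlgEquiv K f := by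
      ext w
      exact (LinearEquiv.congr_fun hα w).symm
    have h := minpoly.aeval K f
    rw [hmin] at h
    rw [hgf, aeval_algHom_apply, h, map_zero]
  rw [hmin] at hE
  obtain ⟨e, he⟩ := hE
  have hfg : ∀ w, f (g w) = w := fun w => φ.apply_symm_apply w
  -- `y = x⁻¹`, since `φ` acts as multiplication by `x`.
  set x := AdjoinRoot.root (p ^ t) with hx
  set y := e.symm (g (e 1)) with hy
  have hxy : x * y = 1 := e.injective (by rw [he, hy, e.apply_symm_apply, hfg])
  have hye : ∀ a, e (y * a) = g (e a) := fun a => φ.injective (by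
    change f (e (y * a)) = f (g (e a))
    rw [← he, ← mul_assoc, hxy, one_mul, hfg])
  have hym : aeval y (p ^ t) = 0 := by
    have hconj : g = e.conjAlgEquiv K (Algebra.lmul K _ y) := by
      ext w
      have := hye (e.symm w)
      rw [e.apply_symm_apply] at this
      exact this.symm
    rw [hconj, aeval_algHom_apply, aeval_algHom_apply, EmbeddingLike.map_eq_zero_iff] at hgm
    simpa using LinearMap.congr_fun hgm 1
  let σ : AdjoinRoot (p ^ t) →ₐ[K] AdjoinRoot (p ^ t) :=
    AdjoinRoot.liftAlgHom (p ^ t) (Algebra.ofId K _) y hym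
  have hσx : σ x = y := AdjoinRoot.liftAlgHom_root _ _ _ _
  have hσy : σ y = x := by
    have h1 : y * σ y = 1 := by rw [← hσx, ← map_mul, hσx, hxy, map_one]
    calc σ y = x * y * σ y := by rw [hxy, one_mul]
      _ = x := by rw [mul_assoc, h1, mul_one]
  have hσσ : ∀ a, σ (σ a) = a := fun a => by
    have : σ.comp σ = AlgHom.id K _ := AdjoinRoot.algHom_ext (by
      change σ (σ x) = x
      rw [hσx, hσy])
    exact DFunLike.congr_fun this a
  obtain ⟨u, hu⟩ := exists_mul_eq_neg_one_adjoinRoot hchar p t ht hp hdeg σ hσσ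
    (by rw [← hx, hσx, mul_comm, hxy])
  let η : V →ₗ[K] V := e.toLinearMap ∘ₗ LinearMap.mulLeft K u ∘ₗ σ.toLinearMap ∘ₗ e.symm.toLinearMap
  have hη : ∀ a, η (e a) = e (u * σ a) := fun a => by simp [η]
  have hηη : ∀ w, η (η w) = -w := fun w => by
    obtain ⟨a, rfl⟩ := e.surjective w
    rw [hη, hη, map_mul σ, hσσ, ← mul_assoc, hu, neg_one_mul, map_neg]
  have hηφ : ∀ w, η (φ (η (φ w))) = -w := fun w => by
    obtain ⟨a, rfl⟩ := e.surjective w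
    change η (f (η (f (e a)))) = _
    rw [← he, hη, ← he, hη, ← map_neg, map_mul σ, hσx, map_mul σ, hσσ]
    congr 1
    linear_combination (x * y * a) * hu - a * hxy
  let η₁ : V ≃ₗ[K] V := LinearEquiv.ofLinearMap η (-η) (by ext w; simp [hηη]) (by ext w; simp [hηη])
  have h1 : ∀ w, η₁ w = η w := fun _ => rfl
  refine ⟨η₁, LinearEquiv.neg K * η₁ * φ, ?_, ?_, ?_⟩
  · ext w
    simp [h1, hηη]
  · ext w
    simp [h1, hηφ]
  · ext w
    simp [h1, hηη]
end

section
/- Let K be a field of characteristic different from 2, V a finite-dimensional K-vector space with a nondegenerate alternating bilinear form f, and let φ ∈ Sp(V, f) be cyclic (some vector's φ-orbit spans V). Let σ ∈ GL(V) satisfy σ⁻¹φσ = φ⁻¹. Then: (1) if σ² = 1, then σ is skew-symplectic, i.e., f(σu, σw) = −f(u, w) for all u, w ∈ V; (2) if σ² = −1, then σ is symplectic, i.e., f(σu, σw) = f(u, w) for all u, w ∈ V. -/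
/-!
Let `v` be a cyclic vector and write `σ v = p(φ) v` for a polynomial `p`. Put `p* = p(φ⁻¹)`: this is
the `f`-adjoint of `p(φ)` because `φ` is an isometry, and `σ p(φ) = p* σ` because `σ` inverts `φ`.
If `σ² = ε`, then `p* σ v = σ p(φ) v = ε v`, hence
`f (σ φ^i v) (σ φ^j v) = f (φ^{-i} p(φ) v) (φ^{-j} σ v) = f (φ^{-i} v) (φ^{-j} p* σ v)
  = ε f (φ^{-i} v) (φ^{-j} v) = ε f (φ^j v) (φ^i v) = -ε f (φ^i v) (φ^j v)`.
Since the vectors `φ^i v` span, `f (σ u) (σ w) = -ε f u w` for all `u` and `w`.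
-/

section

variable {K V : Type*} [Field K] [AddCommGroup V] [Module K V]
  {f : V →ₗ[K] V →ₗ[K] K} {φ σ : V ≃ₗ[K] V}

theorem form_pow_invariant (hφ : ∀ u w : V, f (φ u) (φ w) = f u w) (i : ℕ) (u w : V) :
    f ((φ ^ i) u) ((φ ^ i) w) = f u w := by
  induction i with
  | zero => simp
  | succ n ih => rw [pow_succ', LinearEquiv.mul_apply, LinearEquiv.mul_apply, hφ, ih]

theorem inverting_pow_apply (hσ : σ⁻¹ * φ * σ = φ⁻¹) (i : ℕ) (x : V) :
    σ ((φ ^ i) x) = (φ ^ i)⁻¹ (σ x) := by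
  have h : σ⁻¹ * φ ^ i * σ = (φ ^ i)⁻¹ := by
    have := conj_pow (i := i) (a := σ⁻¹) (b := φ)
    rw [inv_inv, hσ, inv_pow] at this
    exact this.symm
  have h2 : σ * φ ^ i = (φ ^ i)⁻¹ * σ := by
    rw [← inv_inj] at h
    rw [inv_inv] at h
    nth_rewrite 1 [← h]
    group
  exact LinearEquiv.congr_fun h2 x

/-- Every vector `x` in the cyclic span of `v` is `A v` for some `A = p(φ)`; the companion
`A' = p(φ⁻¹)` is the `f`-adjoint of `A`, and `σ A = A' σ`. Both commute with powers of `φ⁻¹`. -/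
theorem exists_adjoint_pair (hφ : ∀ u w : V, f (φ u) (φ w) = f u w)
    (hσ : σ⁻¹ * φ * σ = φ⁻¹) (v x : V)
    (hx : x ∈ Submodule.span K (Set.range fun i : ℕ => (φ ^ i) v)) :
    ∃ A A' : V →ₗ[K] V, A v = x ∧ (∀ a b, f (A a) b = f a (A' b)) ∧
      (∀ a, σ (A a) = A' (σ a)) ∧
      (∀ (j : ℕ) (y : V), A ((φ ^ j)⁻¹ y) = (φ ^ j)⁻¹ (A y)) ∧
      (∀ (j : ℕ) (y : V), A' ((φ ^ j)⁻¹ y) = (φ ^ j)⁻¹ (A' y)) := by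
  induction hx using Submodule.span_induction with
  | mem x hx =>
    obtain ⟨i, rfl⟩ := hx
    refine ⟨(φ ^ i : V ≃ₗ[K] V), ((φ ^ i)⁻¹ : V ≃ₗ[K] V), rfl, fun a b => ?_,
      fun a => inverting_pow_apply hσ i a, fun j y => ?_, fun j y => ?_⟩
    · have h := form_pow_invariant hφ i a ((φ ^ i)⁻¹ b)
      rw [← LinearEquiv.mul_apply, mul_inv_cancel] at h
      exact h
    · have h : φ ^ i * (φ ^ j)⁻¹ = (φ ^ j)⁻¹ * φ ^ i :=
        ((Commute.refl φ).pow_pow i j).inv_right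
      exact LinearEquiv.congr_fun h y
    · have h : (φ ^ i)⁻¹ * (φ ^ j)⁻¹ = (φ ^ j)⁻¹ * (φ ^ i)⁻¹ :=
        ((Commute.refl φ).pow_pow i j).inv_inv
      exact LinearEquiv.congr_fun h y
  | zero => exact ⟨0, 0, by simp⟩
  | add x y _ _ hx hy =>
    obtain ⟨A, A', h1, h2, h3, h4, h5⟩ := hx
    obtain ⟨B, B', k1, k2, k3, k4, k5⟩ := hy
    exact ⟨A + B, A' + B', by simp [h1, k1], by simp [h2, k2], by simp [h3, k3],
      fun j y => by simp only [LinearMap.add_apply, h4, k4, map_add],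
      fun j y => by simp [-LinearEquiv.coe_inv, h5, k5]⟩
  | smul c x _ hx =>
    obtain ⟨A, A', h1, h2, h3, h4, h5⟩ := hx
    exact ⟨c • A, c • A', by simp [h1], by simp [h2], by simp [h3],
      fun j y => by simp only [LinearMap.smul_apply, h4, map_smul],
      fun j y => by simp only [LinearMap.smul_apply, h5, map_smul]⟩

/-- The common form of both cases: if `σ² = ε` is scalar, then `σ` scales `f` by `-ε`. -/
theorem form_inverting_of_sq_scalar (halt : ∀ v : V, f v v = 0)
    (hφ : ∀ u w : V, f (φ u) (φ w) = f u w)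
    (hcyc : ∃ v : V, Submodule.span K (Set.range fun i : ℕ => (φ ^ i) v) = ⊤)
    (hσ : σ⁻¹ * φ * σ = φ⁻¹) (ε : K) (hε : ∀ x, σ (σ x) = ε • x) (u w : V) :
    f (σ u) (σ w) = -(ε * f u w) := by
  obtain ⟨v, hv⟩ := hcyc
  obtain ⟨A, A', h1, h2, h3, h4, h5⟩ :=
    exists_adjoint_pair hφ hσ v (σ v) (hv ▸ Submodule.mem_top)
  have key : ∀ i j : ℕ, f (σ ((φ ^ i) v)) (σ ((φ ^ j) v)) =
      -(ε * f ((φ ^ i) v) ((φ ^ j) v)) := by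
    intro i j
    have hflip : f ((φ ^ i)⁻¹ v) ((φ ^ j)⁻¹ v) = f ((φ ^ j) v) ((φ ^ i) v) := by
      rw [← form_pow_invariant hφ (i + j)]
      simp only [← LinearEquiv.mul_apply]
      rw [pow_add, mul_inv_cancel_right, ← pow_add, add_comm, pow_add, mul_inv_cancel_right]
    rw [inverting_pow_apply hσ, inverting_pow_apply hσ]
    nth_rewrite 1 [← h1]
    rw [← h4, h2, h5, ← h3, h1, hε, map_smul, map_smul, smul_eq_mul, hflip,
      ← LinearMap.IsAlt.neg halt ((φ ^ i) v), mul_neg]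
  have hext : f.compl₁₂ (σ : V →ₗ[K] V) (σ : V →ₗ[K] V) = -(ε • f) := by
    refine LinearMap.ext_on_range hv fun i => LinearMap.ext_on_range hv fun j => ?_
    simpa using key i j
  simpa using LinearMap.congr_fun₂ hext u w

end


/-- Lemma SKEWINV3: Let `char K ≠ 2`, `V` finite-dimensional with a
nondegenerate alternating bilinear form `f`, and let `φ ∈ Sp(V, f)` be cyclic.  If
`σ ∈ GL(V)` inverts `φ` (`σ⁻¹ φ σ = φ⁻¹`), then: (1) if `σ² = 1` then `σ` is
skew-symplectic (`f(σu, σw) = -f(u, w)`); (2) if `σ² = -1` then `σ` is symplectic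
(`f(σu, σw) = f(u, w)`). -/
theorem inverting_involution_skew_symplectic
    (K : Type*) [Field K] (hchar : (2 : K) ≠ 0)
    (V : Type*) [AddCommGroup V] [Module K V] [FiniteDimensional K V]
    (f : V →ₗ[K] V →ₗ[K] K)
    (halt : ∀ v : V, f v v = 0)
    (hnd : ∀ v : V, (∀ w : V, f v w = 0) → v = 0)
    (φ : V ≃ₗ[K] V) (hφ : ∀ u w : V, f (φ u) (φ w) = f u w)
    (hcyc : ∃ v : V, Submodule.span K (Set.range fun i : ℕ => (φ ^ i) v) = ⊤)
    (σ : V ≃ₗ[K] V) (hσ : σ⁻¹ * φ * σ = φ⁻¹) :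
    (σ * σ = 1 → ∀ u w : V, f (σ u) (σ w) = -f u w) ∧
    (σ * σ = LinearEquiv.neg K → ∀ u w : V, f (σ u) (σ w) = f u w) := by
  refine ⟨fun h u w => ?_, fun h u w => ?_⟩
  · simpa using form_inverting_of_sq_scalar halt hφ hcyc hσ 1
      (fun x => by simpa using LinearEquiv.congr_fun h x) u w
  · simpa using form_inverting_of_sq_scalar halt hφ hcyc hσ (-1)
      (fun x => by simpa using LinearEquiv.congr_fun h x) u w
end

section
/- Let K be a field of characteristic different from 2 in which −1 is not a square, and let P ∈ Sp(2n, K) be conjugate within Sp(2n, K) to its inverse, i.e., there exists Q ∈ Sp(2n, K) with Q⁻¹ P Q = P⁻¹. Then for every integer t ≥ 1, the rank of (P − I)^t is even. -/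
open Matrix

/-!
Write `J` for the symplectic form and put `D = P - 2 + P⁻¹ = P⁻¹ (P - 1)²` and
`S = P - P⁻¹ = P⁻¹ (P - 1) (P + 1)`.  With respect to `J`, the adjoint of `P` is `P⁻¹`, so `D` is
self-adjoint and `S` is skew-adjoint; conjugation by `Q` fixes `D` and negates `S`.

* `J D ^ m` is skew-symmetric, so its rank, which is that of `(P - 1) ^ (2 m)`, is even
  (`even_rank_of_skew`).
* `J D ^ m S` is symmetric and congruent, through `Q`, to its negative.  Compressed to a nonsingular
  form on a space of dimension `r`, its rank, this yields `(det Z) ^ 2 = (-1) ^ r` for some `Z`;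
  as `-1` is not a square, `r` is even (`even_rank_of_symm`).  So the rank of
  `(P - 1) ^ (2 m + 1) (P + 1)` is even.

Since `X - 1` and `X + 1` are coprime (`2 ≠ 0`), the kernel of `(P - 1) ^ t (P + 1)` has dimension
`dim ker (P - 1) ^ t + dim ker (P + 1)` (`rank_mul_add_one`).  It remains to see that
`dim ker (P + 1)` is even.  For large odd `t` the kernels of `(P - 1) ^ t` and `(P - 1) ^ (t + 1)`
coincide, so the former has even dimension by the first point, and the second point applied to
this `t` gives the claim.
-/

section Compression

variable {K ι : Type*} [Field K] [Fintype ι] [DecidableEq ι]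

/-- Every matrix `A` of rank `r` is fixed by right multiplication by a product `E * G` through
`K ^ r`: the matrix `G` gives the coordinates of `A v` in a basis of the range, and `E` chooses
preimages of the basis vectors. -/
lemma exists_mul_mul_eq_self (A : Matrix ι ι K) :
    ∃ (E : Matrix ι (Fin A.rank) K) (G : Matrix (Fin A.rank) ι K), A * E * G = A := by
  obtain ⟨s, hs⟩ := (Matrix.toLin' A).rangeRestrict.exists_rightInverse_of_surjective
    (LinearMap.range_rangeRestrict _)
  have hr : Module.finrank K (LinearMap.range (Matrix.toLin' A)) = A.rank := rfl
  let e := (Module.finBasisOfFinrankEq K _ hr).equivFun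
  refine ⟨LinearMap.toMatrix' (s ∘ₗ e.symm.toLinearMap),
    LinearMap.toMatrix' (e.toLinearMap ∘ₗ (Matrix.toLin' A).rangeRestrict), ?_⟩
  apply Matrix.toLin'.injective
  rw [Matrix.toLin'_mul, Matrix.toLin'_mul, Matrix.toLin'_toMatrix', Matrix.toLin'_toMatrix']
  ext1 i
  ext1
  have h := fun w => congrArg Subtype.val (LinearMap.congr_fun hs w)
  simp only [LinearMap.comp_apply, LinearMap.codRestrict_apply, LinearMap.rangeRestrict,
    LinearMap.id_apply] at h
  simp [h, LinearMap.rangeRestrict]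

/-- A symmetric or skew-symmetric matrix is, up to its radical, a nonsingular form on a space of
dimension its rank. -/
lemma exists_compression (A : Matrix ι ι K) (hA : Aᵀ = A ∨ Aᵀ = -A) :
    ∃ (E : Matrix ι (Fin A.rank) K) (G : Matrix (Fin A.rank) ι K),
      Gᵀ * (Eᵀ * A * E) * G = A ∧ (Eᵀ * A * E).det ≠ 0 := by
  obtain ⟨E, G, h⟩ := exists_mul_mul_eq_self A
  have h2 : Gᵀ * Eᵀ * A = A := by
    have := congrArg Matrix.transpose h
    simp only [Matrix.transpose_mul] at this
    rcases hA with hA | hA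
    · simpa [hA, Matrix.mul_assoc] using this
    · simpa [hA, Matrix.mul_assoc] using this
  have h3 : Gᵀ * (Eᵀ * A * E) * G = A := by
    calc Gᵀ * (Eᵀ * A * E) * G = (Gᵀ * Eᵀ * A) * E * G := by simp only [Matrix.mul_assoc]
      _ = A := by rw [h2, h]
  refine ⟨E, G, h3, ?_⟩
  -- The compressed matrix has size `A.rank`, and at least that rank since `A` factors through it.
  have hrk : A.rank ≤ (Eᵀ * A * E).rank := by
    conv_lhs => rw [← h3]
    exact (Matrix.rank_mul_le_left _ _).trans (Matrix.rank_mul_le_right _ _)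
  have htop : LinearMap.range (Eᵀ * A * E).mulVecLin = ⊤ := by
    apply Submodule.eq_top_of_finrank_eq
    refine le_antisymm (Submodule.finrank_le _) ?_
    rw [Module.finrank_fintype_fun_eq_card, Fintype.card_fin]
    exact hrk
  have hu : IsUnit (Eᵀ * A * E) :=
    Matrix.mulVec_surjective_iff_isUnit.mp (LinearMap.range_eq_top.mp htop)
  exact ((Matrix.isUnit_iff_isUnit_det _).mp hu).ne_zero

lemma even_rank_of_skew (h2 : (2 : K) ≠ 0) (A : Matrix ι ι K) (hA : Aᵀ = -A) :
    Even A.rank := by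
  obtain ⟨E, G, -, hN⟩ := exists_compression A (Or.inr hA)
  set N := Eᵀ * A * E with hNdef
  have hNt : Nᵀ = -N := by simp [hNdef, hA, Matrix.mul_assoc]
  have hd := congrArg Matrix.det hNt
  rw [Matrix.det_transpose, Matrix.det_neg, Fintype.card_fin] at hd
  by_contra hodd
  rw [Nat.not_even_iff_odd] at hodd
  rw [hodd.neg_one_pow] at hd
  have : 2 * N.det = 0 := by linear_combination hd
  exact (mul_ne_zero h2 hN) this

lemma even_rank_of_symm (hsq : ¬ IsSquare (-1 : K)) (A q : Matrix ι ι K) (hA : Aᵀ = A)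
    (hq : qᵀ * A * q = -A) : Even A.rank := by
  obtain ⟨E, G, hG, hN⟩ := exists_compression A (Or.inl hA)
  set N := Eᵀ * A * E with hNdef
  have hZ : (G * q * E)ᵀ * N * (G * q * E) = -N := by
    calc (G * q * E)ᵀ * N * (G * q * E) = Eᵀ * (qᵀ * (Gᵀ * N * G) * q) * E := by
          simp only [Matrix.transpose_mul, Matrix.mul_assoc]
      _ = -N := by rw [hG, hq, hNdef]; simp
  have hd := congrArg Matrix.det hZ
  rw [Matrix.det_mul, Matrix.det_mul, Matrix.det_transpose, Matrix.det_neg,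
    Fintype.card_fin] at hd
  by_contra hodd
  rw [Nat.not_even_iff_odd] at hodd
  rw [hodd.neg_one_pow] at hd
  refine hsq ⟨(G * q * E).det, mul_right_cancel₀ hN ?_⟩
  linear_combination -hd

lemma rank_add_finrank_ker (A : Matrix ι ι K) :
    A.rank + Module.finrank K (LinearMap.ker (Matrix.toLin' A)) = Fintype.card ι := by
  have := LinearMap.finrank_range_add_finrank_ker (Matrix.toLin' A)
  rwa [Module.finrank_fintype_fun_eq_card] at this

/-- The kernel of `(p - 1) ^ t * (p + 1)` is the direct sum of the kernels of its two factors;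
this is the resulting identity between the three ranks. -/
lemma rank_mul_add_one (h2 : (2 : K) ≠ 0) (p : Matrix ι ι K) (t : ℕ) :
    ((p - 1) ^ t * (p + 1)).rank + Fintype.card ι = ((p - 1) ^ t).rank + (p + 1).rank := by
  open Polynomial in
  have hcop : IsCoprime ((X - 1 : K[X]) ^ t) (X + 1) := by
    apply IsCoprime.pow_left
    refine ⟨-C (2⁻¹), C (2⁻¹), ?_⟩
    have : (C (2⁻¹) * 2 : K[X]) = 1 := by
      rw [← map_ofNat (C : K →+* K[X]) 2, ← C_mul, inv_mul_cancel₀ h2, C_1]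
    linear_combination this
  let T := Matrix.toLin' p
  have e1 : Polynomial.aeval T ((Polynomial.X - 1 : Polynomial K) ^ t)
      = Matrix.toLin' ((p - 1) ^ t) := by
    simp [T, Matrix.toLin'_pow, Module.End.one_eq_id]
  have e2 : Polynomial.aeval T (Polynomial.X + 1 : Polynomial K) = Matrix.toLin' (p + 1) := by
    simp [T, Module.End.one_eq_id]
  have hs := Polynomial.sup_ker_aeval_eq_ker_aeval_mul_of_coprime T hcop
  have hd := Polynomial.disjoint_ker_aeval_of_isCoprime T hcop
  rw [map_mul, e1, e2, Module.End.mul_eq_comp, ← Matrix.toLin'_mul] at hs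
  rw [e1, e2] at hd
  have hf := Submodule.finrank_sup_add_finrank_inf_eq
    (LinearMap.ker (Matrix.toLin' ((p - 1) ^ t))) (LinearMap.ker (Matrix.toLin' (p + 1)))
  rw [hs, hd.eq_bot, finrank_bot] at hf
  have a := rank_add_finrank_ker ((p - 1) ^ t * (p + 1))
  have b := rank_add_finrank_ker ((p - 1) ^ t)
  have c := rank_add_finrank_ker (p + 1)
  omega

lemma rank_pow_succ_eq (A : Matrix ι ι K) (t : ℕ) (ht : Fintype.card ι ≤ t) :
    (A ^ (t + 1)).rank = (A ^ t).rank := by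
  have hfin : Module.finrank K (ι → K) = Fintype.card ι := Module.finrank_fintype_fun_eq_card K
  have h1 := Module.End.ker_pow_eq_ker_pow_finrank_of_le (f := Matrix.toLin' A) (m := t)
    (by omega)
  have h2 := Module.End.ker_pow_eq_ker_pow_finrank_of_le (f := Matrix.toLin' A) (m := t + 1)
    (by omega)
  have a := rank_add_finrank_ker (A ^ t)
  have b := rank_add_finrank_ker (A ^ (t + 1))
  rw [Matrix.toLin'_pow] at a b
  rw [h1] at a
  rw [h2] at b
  omega

/-- The core of the argument, for any nonsingular skew-symmetric `J`; here `p'` and `q'` are the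
inverses of `p` and `q`, and `hp`, `hq` say that they are also the adjoints with respect to `J`. -/
lemma even_ranks_of_reversible (h2 : (2 : K) ≠ 0) (hsq : ¬ IsSquare (-1 : K))
    (J p p' q q' : Matrix ι ι K) (hJ : Jᵀ = -J) (hJu : IsUnit J.det)
    (hpp : p * p' = 1) (hpp' : p' * p = 1) (hqq : q' * q = 1)
    (hp : pᵀ * J = J * p') (hp' : p'ᵀ * J = J * p) (hq : qᵀ * J = J * q')
    (hr : p * q = q * p') (hr' : p' * q = q * p) (m : ℕ) :
    Even ((p - 1) ^ (2 * m)).rank ∧ Even ((p - 1) ^ (2 * m + 1) * (p + 1)).rank := by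
  set D := p - 2 + p' with hD
  set S := p - p' with hS
  have hpu : ∀ k, IsUnit (p' ^ k).det := fun k => by
    rw [Matrix.det_pow]
    exact (Matrix.isUnit_det_of_left_inverse hpp).pow k
  have hcomm : Commute p p' := hpp.trans hpp'.symm
  have hDfac : D = p' * (p - 1) ^ 2 := by
    have : p' * (p - 1) ^ 2 = (p' * p) * p - 2 * (p' * p) + p' := by noncomm_ring
    rw [this, hpp', hD, one_mul, mul_one]
  have hSfac : S = p' * ((p - 1) * (p + 1)) := by
    have : p' * ((p - 1) * (p + 1)) = (p' * p) * p - p' := by noncomm_ring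
    rw [this, hpp', hS, one_mul]
  have hc1 : Commute p' (p - 1) := hcomm.symm.sub_right (Commute.one_right _)
  have hDm : D ^ m = p' ^ m * (p - 1) ^ (2 * m) := by
    rw [hDfac, (hc1.pow_right 2).mul_pow, pow_mul]
  have hDS : Commute D S := by
    have h2c : ∀ x : Matrix ι ι K, Commute (2 : Matrix ι ι K) x := fun x => Commute.ofNat_left 2 x
    exact (((Commute.refl p).sub_right hcomm).sub_left
      ((h2c p).sub_right (h2c p'))).add_left (hcomm.symm.sub_right (Commute.refl p'))
  have hDmS : D ^ m * S = p' ^ (m + 1) * ((p - 1) ^ (2 * m + 1) * (p + 1)) := by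
    have := (hc1.pow_right (2 * m)).eq
    rw [hDm, hSfac, pow_succ, pow_succ]
    calc p' ^ m * (p - 1) ^ (2 * m) * (p' * ((p - 1) * (p + 1)))
        = p' ^ m * ((p - 1) ^ (2 * m) * p') * ((p - 1) * (p + 1)) := by
          simp only [mul_assoc]
      _ = _ := by rw [← this]; simp only [mul_assoc]
  have hDt : Dᵀ * J = J * D := by
    have : (2 : Matrix ι ι K)ᵀ = 2 := by
      rw [← one_add_one_eq_two, Matrix.transpose_add, Matrix.transpose_one]
    rw [hD, Matrix.transpose_add, Matrix.transpose_sub, this, add_mul, sub_mul, hp, hp']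
    noncomm_ring
  have hDtm : (D ^ m)ᵀ * J = J * D ^ m := by
    rw [Matrix.transpose_pow]
    exact (SemiconjBy.pow_right (show SemiconjBy J D Dᵀ from hDt.symm) m).symm
  have hSt : Sᵀ * J = -(J * S) := by
    rw [hS, Matrix.transpose_sub, sub_mul, hp, hp']
    noncomm_ring
  have hDq : D * q = q * D := by
    rw [hD, add_mul, sub_mul, hr, hr']
    noncomm_ring
  have hDqm : D ^ m * q = q * D ^ m :=
    (SemiconjBy.pow_right (show SemiconjBy q D D from hDq.symm) m).symm
  have hSq : S * q = -(q * S) := by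
    rw [hS, sub_mul, hr, hr']
    noncomm_ring
  constructor
  · have h := even_rank_of_skew h2 (J * D ^ m) (by
      rw [Matrix.transpose_mul, hJ, mul_neg, hDtm])
    rwa [Matrix.rank_mul_eq_right_of_isUnit_det _ _ hJu, hDm,
      Matrix.rank_mul_eq_right_of_isUnit_det _ _ (hpu m)] at h
  · have h := even_rank_of_symm hsq (J * (D ^ m * S)) q
      (by
        rw [Matrix.transpose_mul, hJ, mul_neg, Matrix.transpose_mul, mul_assoc, hDtm,
          ← mul_assoc, hSt, neg_mul, neg_neg, mul_assoc, (hDS.pow_left m).eq])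
      (by
        calc qᵀ * (J * (D ^ m * S)) * q = (qᵀ * J) * (D ^ m * (S * q)) := by
              simp only [mul_assoc]
          _ = -(J * q' * ((D ^ m * q) * S)) := by
              rw [hq, hSq]; simp only [mul_assoc, mul_neg]
          _ = -(J * (q' * q) * (D ^ m * S)) := by
              rw [hDqm]; simp only [mul_assoc]
          _ = _ := by rw [hqq, mul_one])
    rwa [Matrix.rank_mul_eq_right_of_isUnit_det _ _ hJu, hDmS,
      Matrix.rank_mul_eq_right_of_isUnit_det _ _ (hpu (m + 1))] at h

end Compression

/-- With respect to the symplectic form, the adjoint of a symplectic matrix is its inverse. -/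
lemma symplectic_transpose_mul_J {K : Type*} [Field K] {n : ℕ}
    (P : Matrix.symplecticGroup (Fin n) K) :
    (P : Matrix (Fin n ⊕ Fin n) (Fin n ⊕ Fin n) K)ᵀ * Matrix.J (Fin n) K =
      Matrix.J (Fin n) K * (P⁻¹ : Matrix.symplecticGroup (Fin n) K) := by
  have h := SymplecticGroup.mem_iff'.mp P.2
  have h1 : (P : Matrix (Fin n ⊕ Fin n) (Fin n ⊕ Fin n) K) *
      (P⁻¹ : Matrix.symplecticGroup (Fin n) K) = 1 :=
    congrArg Subtype.val (mul_inv_cancel P)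
  calc _ = (P : Matrix (Fin n ⊕ Fin n) (Fin n ⊕ Fin n) K)ᵀ * Matrix.J (Fin n) K *
        (P * (P⁻¹ : Matrix.symplecticGroup (Fin n) K)) := by rw [h1, mul_one]
    _ = _ := by rw [← mul_assoc, h]

/-- Lemma SKEWINV5: Let `char K ≠ 2` with `-1` not a square in `K`, and let
`P ∈ Sp(2n, K)` be conjugate within `Sp(2n, K)` to its inverse.  Then `rank((P - I)^t)` is
even for every `t ≥ 1`. -/
theorem reversible_sp_rank_even
    (K : Type*) [Field K] (hchar : (2 : K) ≠ 0) (hsq : ¬ IsSquare (-1 : K))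
    (n : ℕ)
    (P : Matrix.symplecticGroup (Fin n) K)
    (hrev : ∃ Q : Matrix.symplecticGroup (Fin n) K, Q⁻¹ * P * Q = P⁻¹) :
    ∀ t : ℕ, 1 ≤ t →
      Even (((P : Matrix (Fin n ⊕ Fin n) (Fin n ⊕ Fin n) K) - 1) ^ t).rank := by
  intro t _
  obtain ⟨Q, hQ⟩ := hrev
  have hr : P * Q = Q * P⁻¹ := by rw [← hQ]; group
  have hr' : P⁻¹ * Q = Q * P := by
    have : P⁻¹ * (P * Q) * P = P⁻¹ * (Q * P⁻¹) * P := by rw [hr]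
    simpa [mul_assoc] using this.symm
  have key := even_ranks_of_reversible hchar hsq (Matrix.J (Fin n) K)
    (P : Matrix (Fin n ⊕ Fin n) (Fin n ⊕ Fin n) K) (P⁻¹ : Matrix.symplecticGroup (Fin n) K)
    Q (Q⁻¹ : Matrix.symplecticGroup (Fin n) K)
    (Matrix.J_transpose _ _) (Matrix.isUnit_det_J _ _)
    (congrArg Subtype.val (mul_inv_cancel P)) (congrArg Subtype.val (inv_mul_cancel P))
    (congrArg Subtype.val (inv_mul_cancel Q))
    (symplectic_transpose_mul_J P)
    (by simpa only [inv_inv] using symplectic_transpose_mul_J P⁻¹)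
    (symplectic_transpose_mul_J Q)
    (congrArg Subtype.val hr) (congrArg Subtype.val hr')
  set p : Matrix (Fin n ⊕ Fin n) (Fin n ⊕ Fin n) K := P.1
  have hcard : Fintype.card (Fin n ⊕ Fin n) = n + n := by simp
  -- Beyond exponent `2 n` the ranks of the powers are stationary, so an odd power has the
  -- even rank of the next power; this determines the parity of the rank of `p + 1`.
  have hstab := rank_pow_succ_eq (p - 1) (2 * n + 1) (by omega)
  have hbig := rank_mul_add_one hchar p (2 * n + 1)
  have ha := (key (n + 1)).1
  rw [show 2 * (n + 1) = 2 * n + 1 + 1 by ring, hstab] at ha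
  have hb := (key n).2
  obtain ⟨m, rfl | rfl⟩ := Nat.even_or_odd' t
  · exact (key m).1
  · have hc := (key m).2
    have hm := rank_mul_add_one hchar p (2 * m + 1)
    rw [Nat.even_iff] at ha hb hc ⊢
    omega
end
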